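/- Fix d ≥ 1 and set n = ⌊d/2⌋. Consider the complex vector space of all maps ψ assigning to each binary quadratic Q = q₀x₁² + 2q₁x₁x₂ + q₂x₂² and each binary form F of order d a binary form ψ(F,Q) of order d, such that (i) ψ(F,Q) is ℂ-linear in F, (ii) each coefficient of ψ(F,Q) is a polynomial function of (q₀,q₁,q₂) and of the coefficients of F which is homogeneous of degree d in (q₀,q₁,q₂), and (iii) ψ(F∘g, Q∘g) = ψ(F,Q)∘g for every g ∈ SL₂(ℂ), where (H∘g)(x₁,x₂) = H(g₁₁x₁+g₁₂x₂, g₂₁x₁+g₂₂x₂). This vector space has dimension n+1 over ℂ. -/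

import Mathlib

open MvPolynomial Finset

/-- The substitution action `(H∘g)(x₁,x₂) = H(g₁₁x₁+g₁₂x₂, g₂₁x₁+g₂₂x₂)`. -/
noncomputable def act (g : Matrix (Fin 2) (Fin 2) ℂ) (F : MvPolynomial (Fin 2) ℂ) :
    MvPolynomial (Fin 2) ℂ :=
  aeval (fun i => C (g i 0) * X 0 + C (g i 1) * X 1) F

/-- The coefficient triple of `Q∘g`, where `Q = q₀x₁² + 2q₁x₁x₂ + q₂x₂²` has coefficient
triple `q = (q₀,q₁,q₂)`. -/
noncomputable def qact (g : Matrix (Fin 2) (Fin 2) ℂ) (q : Fin 3 → ℂ) : Fin 3 → ℂ :=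
  ![q 0 * g 0 0 ^ 2 + 2 * q 1 * g 0 0 * g 1 0 + q 2 * g 1 0 ^ 2,
    q 0 * g 0 0 * g 0 1 + q 1 * (g 0 0 * g 1 1 + g 0 1 * g 1 0) + q 2 * g 1 0 * g 1 1,
    q 0 * g 0 1 ^ 2 + 2 * q 1 * g 0 1 * g 1 1 + q 2 * g 1 1 ^ 2]

/-- The space `S_d` of binary forms of order `d`. -/
noncomputable abbrev Sd (d : ℕ) : Submodule ℂ (MvPolynomial (Fin 2) ℂ) :=
  homogeneousSubmodule (Fin 2) ℂ d

/-- A map `ψ` (linear in `F`, from order-`d` forms to order-`d` forms, parametrized by the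
coefficient triple `q` of a quadratic `Q`) is *good* if: (ii) each coefficient of `ψ(F,Q)`
is a polynomial function of `q`, homogeneous of degree `d` in `q`; and (iii) `ψ` is
`SL₂(ℂ)`-equivariant: `ψ(F∘g, Q∘g) = ψ(F,Q)∘g`. -/
def GoodMap (d : ℕ) (ψ : (Fin 3 → ℂ) → (Sd d →ₗ[ℂ] Sd d)) : Prop :=
  (∀ F : Sd d, ∀ m : Fin 2 →₀ ℕ, ∃ P : MvPolynomial (Fin 3) ℂ, P.IsHomogeneous d ∧
    ∀ q : Fin 3 → ℂ, coeff m ((ψ q F : MvPolynomial (Fin 2) ℂ)) = eval q P) ∧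
  (∀ g : Matrix (Fin 2) (Fin 2) ℂ, g.det = 1 → ∀ q : Fin 3 → ℂ, ∀ F F' : Sd d,
    (F' : MvPolynomial (Fin 2) ℂ) = act g (F : MvPolynomial (Fin 2) ℂ) →
    ((ψ (qact g q) F' : MvPolynomial (Fin 2) ℂ)) = act g ((ψ q F : MvPolynomial (Fin 2) ℂ)))


theorem op_mem (d : ℕ) (hd : 1 ≤ d) (i j : Fin 2) (F : MvPolynomial (Fin 2) ℂ) (hF : F ∈ Sd d) :
    X i * pderiv j F ∈ Sd d := by
  have h1 := (isHomogeneous_X ℂ i).mul (IsHomogeneous.pderiv (i := j) ((mem_homogeneousSubmodule _ _).1 hF))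
  rw [mem_homogeneousSubmodule]
  convert h1 using 1
  omega

noncomputable def op (d : ℕ) (hd : 1 ≤ d) (i j : Fin 2) : Sd d →ₗ[ℂ] Sd d where
  toFun F := ⟨X i * pderiv j F.1, op_mem d hd i j F.1 F.2⟩
  map_add' F G := by
    apply Subtype.ext
    simp [mul_add]
  map_smul' c F := by
    apply Subtype.ext
    simp

noncomputable def Dop (d : ℕ) (hd : 1 ≤ d) (q : Fin 3 → ℂ) : Module.End ℂ (Sd d) :=
  q 0 • op d hd 0 1 + q 1 • (op d hd 1 1 - op d hd 0 0) + q 2 • (- op d hd 1 0)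

def disc (q : Fin 3 → ℂ) : ℂ := q 1 ^ 2 - q 0 * q 2

noncomputable def psi (d : ℕ) (hd : 1 ≤ d) (k : ℕ) (q : Fin 3 → ℂ) : Sd d →ₗ[ℂ] Sd d :=
  disc q ^ k • (Dop d hd q ^ (d - 2 * k) : Module.End ℂ (Sd d))

theorem Dop_poly (d : ℕ) (hd : 1 ≤ d) (j : ℕ) : ∀ (F : Sd d) (m : Fin 2 →₀ ℕ),
    ∃ P : MvPolynomial (Fin 3) ℂ, P.IsHomogeneous j ∧
    ∀ q : Fin 3 → ℂ, coeff m (((Dop d hd q ^ j : Module.End ℂ (Sd d)) F : Sd d) :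
      MvPolynomial (Fin 2) ℂ) = eval q P := by
  induction j with
  | zero =>
    intro F m
    exact ⟨C (coeff m F.1), isHomogeneous_C _ _, fun q => by simp⟩
  | succ j ih =>
    intro F m
    obtain ⟨P0, h0, e0⟩ := ih (op d hd 0 1 F) m
    obtain ⟨P1, h1, e1⟩ := ih ((op d hd 1 1 - op d hd 0 0) F) m
    obtain ⟨P2, h2, e2⟩ := ih ((-op d hd 1 0) F) m
    refine ⟨X 0 * P0 + X 1 * P1 + X 2 * P2, ?_, fun q => ?_⟩
    · rw [add_comm j 1]
      exact (((isHomogeneous_X ℂ _).mul h0).add ((isHomogeneous_X ℂ _).mul h1)).add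
        ((isHomogeneous_X ℂ _).mul h2)
    · have : (Dop d hd q ^ (j+1) : Module.End ℂ (Sd d)) F =
        q 0 • (Dop d hd q ^ j : Module.End ℂ (Sd d)) (op d hd 0 1 F)
        + q 1 • (Dop d hd q ^ j : Module.End ℂ (Sd d)) ((op d hd 1 1 - op d hd 0 0) F)
        + q 2 • (Dop d hd q ^ j : Module.End ℂ (Sd d)) ((-op d hd 1 0) F) := by
        have hD : Dop d hd q F = q 0 • op d hd 0 1 F + q 1 • (op d hd 1 1 - op d hd 0 0) F
          + q 2 • (-op d hd 1 0) F := rfl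
        rw [pow_succ, Module.End.mul_apply, hD, map_add, map_add, map_smul, map_smul, map_smul]
      rw [this]
      simp only [Submodule.coe_add, Submodule.coe_smul, coeff_add, coeff_smul, e0, e1, e2]
      simp

noncomputable def actHom (g : Matrix (Fin 2) (Fin 2) ℂ) :
    MvPolynomial (Fin 2) ℂ →ₐ[ℂ] MvPolynomial (Fin 2) ℂ :=
  aeval (fun i => C (g i 0) * X 0 + C (g i 1) * X 1)

theorem act_eq (g : Matrix (Fin 2) (Fin 2) ℂ) (F) : act g F = actHom g F := rfl

theorem actHom_X (g : Matrix (Fin 2) (Fin 2) ℂ) (i) :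
    actHom g (X i) = C (g i 0) * X 0 + C (g i 1) * X 1 := by simp [actHom]

theorem actHom_C (g : Matrix (Fin 2) (Fin 2) ℂ) (c) :
    actHom g (C c) = C c := by simp [actHom]

noncomputable def Draw (q : Fin 3 → ℂ) (F : MvPolynomial (Fin 2) ℂ) : MvPolynomial (Fin 2) ℂ :=
  (C (q 0) * X 0 + C (q 1) * X 1) * pderiv 1 F - (C (q 1) * X 0 + C (q 2) * X 1) * pderiv 0 F

theorem Dop_coe (d : ℕ) (hd : 1 ≤ d) (q : Fin 3 → ℂ) (F : Sd d) :
    ((Dop d hd q F : Sd d) : MvPolynomial (Fin 2) ℂ) = Draw q F.1 := by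
  simp only [Dop, op, Draw, LinearMap.add_apply, LinearMap.smul_apply, LinearMap.sub_apply,
    LinearMap.neg_apply, LinearMap.coe_mk, AddHom.coe_mk, Submodule.coe_add, Submodule.coe_smul,
    Submodule.coe_sub, Submodule.coe_neg, smul_eq_C_mul]
  ring

theorem Draw_act (g : Matrix (Fin 2) (Fin 2) ℂ) (hg : g.det = 1) (q : Fin 3 → ℂ)
    (F : MvPolynomial (Fin 2) ℂ) : Draw (qact g q) (actHom g F) = actHom g (Draw q F) := by
  rw [Matrix.det_fin_two] at hg
  have hg' : C (g 0 0) * C (g 1 1) - C (g 0 1) * C (g 1 0) = (1 : MvPolynomial (Fin 2) ℂ) := by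
    rw [← C_mul, ← C_mul, ← C_sub, hg, C_1]
  induction F using MvPolynomial.induction_on with
  | C a => simp [Draw, actHom_C]
  | add p r hp hr =>
    have e : ∀ (q) (p r : MvPolynomial (Fin 2) ℂ), Draw q (p + r) = Draw q p + Draw q r := by
      intro q p r; simp only [Draw, map_add]; ring
    rw [map_add, e, e, hp, hr, map_add]
  | mul_X p i hp =>
    have e : ∀ (q) (p r : MvPolynomial (Fin 2) ℂ), Draw q (p * r) = Draw q p * r + p * Draw q r := by
      intro q p r; simp only [Draw, Derivation.leibniz, smul_eq_mul]; ring
    rw [map_mul, e, e, hp, map_add, map_mul, map_mul]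
    suffices hX : Draw (qact g q) (actHom g (X i)) = actHom g (Draw q (X i)) by rw [hX]
    clear hp e
    have h00 : pderiv (0 : Fin 2) (X 1 : MvPolynomial (Fin 2) ℂ) = 0 := by
      rw [pderiv_X_of_ne]; decide
    have h01 : pderiv (1 : Fin 2) (X 0 : MvPolynomial (Fin 2) ℂ) = 0 := by
      rw [pderiv_X_of_ne]; decide
    have hC2 : (C 2 : MvPolynomial (Fin 2) ℂ) = 2 := map_ofNat C 2
    fin_cases i
    · simp [Draw, actHom_X, actHom_C, qact, Derivation.leibniz, h00, h01, hC2]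
      linear_combination (-(C (q 1) * (C (g 0 0) * X 0 + C (g 0 1) * X 1) + C (q 2) * (C (g 1 0) * X 0 + C (g 1 1) * X 1))) * hg'
    · simp [Draw, actHom_X, actHom_C, qact, Derivation.leibniz, h00, h01, hC2]
      linear_combination ((C (q 0) * (C (g 0 0) * X 0 + C (g 0 1) * X 1) + C (q 1) * (C (g 1 0) * X 0 + C (g 1 1) * X 1))) * hg'

theorem disc_act (g : Matrix (Fin 2) (Fin 2) ℂ) (hg : g.det = 1) (q : Fin 3 → ℂ) :
    disc (qact g q) = disc q := by
  rw [Matrix.det_fin_two] at hg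
  simp [disc, qact]
  linear_combination (g 0 0 * g 1 1 - g 0 1 * g 1 0 + 1) * (q 1 ^ 2 - q 0 * q 2) * hg

theorem Dop_pow_act (d : ℕ) (hd : 1 ≤ d) (g : Matrix (Fin 2) (Fin 2) ℂ) (hg : g.det = 1)
    (q : Fin 3 → ℂ) (j : ℕ) : ∀ F F' : Sd d, F'.1 = actHom g F.1 →
    (((Dop d hd (qact g q) ^ j : Module.End ℂ (Sd d)) F' : Sd d) : MvPolynomial (Fin 2) ℂ) =
      actHom g ((Dop d hd q ^ j : Module.End ℂ (Sd d)) F : Sd d).1 := by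
  induction j with
  | zero => intro F F' h; simpa using h
  | succ j ih =>
    intro F F' h
    rw [pow_succ, pow_succ, Module.End.mul_apply, Module.End.mul_apply]
    apply ih
    rw [Dop_coe, Dop_coe, h, Draw_act g hg]

theorem psi_good (d : ℕ) (hd : 1 ≤ d) (k : ℕ) (hk : 2 * k ≤ d) : GoodMap d (psi d hd k) := by
  refine ⟨fun F m => ?_, fun g hg q F F' h => ?_⟩
  · obtain ⟨P, hP, e⟩ := Dop_poly d hd (d - 2 * k) F m
    refine ⟨(X 1 ^ 2 - X 0 * X 2) ^ k * P, ?_, fun q => ?_⟩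
    · have h2 : (X 1 ^ 2 - X 0 * X 2 : MvPolynomial (Fin 3) ℂ).IsHomogeneous 2 :=
        (isHomogeneous_X_pow 1 2).sub ((isHomogeneous_X ℂ 0).mul (isHomogeneous_X ℂ 2))
      convert (h2.pow k).mul hP using 1
      omega
    · simp [psi, e, disc]
  · rw [act_eq] at h ⊢
    have := Dop_pow_act d hd g hg q (d - 2 * k) F F' h
    simp only [psi, LinearMap.smul_apply, Submodule.coe_smul, this, disc_act g hg, map_smul]

noncomputable def ea (d : ℕ) (a : Fin (d+1)) : Sd d :=
  ⟨monomial (Finsupp.single 0 a.1 + Finsupp.single 1 (d - a.1)) 1, by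
    rw [mem_homogeneousSubmodule]
    apply isHomogeneous_monomial
    rw [map_add, Finsupp.degree_single, Finsupp.degree_single]
    omega⟩

theorem Dop_ea (d : ℕ) (hd : 1 ≤ d) (a : Fin (d+1)) :
    Dop d hd ![0,1,0] (ea d a) = ((d : ℂ) - 2 * a.1) • ea d a := by
  apply Subtype.ext
  rw [Dop_coe]
  simp only [Draw, ea, Submodule.coe_smul]
  simp only [Matrix.cons_val, C_0, C_1, zero_mul, one_mul, zero_add, add_zero]
  rw [X_mul_pderiv_monomial, X_mul_pderiv_monomial]
  have : a.1 ≤ d := by omega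
  simp [smul_monomial, ← map_sub, Nat.cast_sub this]
  congr 1
  ring

theorem psi_ea (d : ℕ) (hd : 1 ≤ d) (k : ℕ) (a : Fin (d+1)) :
    psi d hd k ![0,1,0] (ea d a) = ((d : ℂ) - 2 * a.1) ^ (d - 2 * k) • ea d a := by
  have : ∀ j, (Dop d hd ![0,1,0] ^ j : Module.End ℂ (Sd d)) (ea d a) =
      ((d : ℂ) - 2 * a.1) ^ j • ea d a := by
    intro j
    induction j with
    | zero => simp
    | succ j ih => rw [pow_succ, Module.End.mul_apply, Dop_ea, map_smul, ih, smul_smul, pow_succ, mul_comm]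
  simp [psi, this, disc]

theorem ea_ne (d : ℕ) (a : Fin (d+1)) : ea d a ≠ 0 := by
  intro h
  have := congrArg Subtype.val h
  simp [ea] at this

theorem psi_indep (d : ℕ) (hd : 1 ≤ d) (c : Fin (d / 2 + 1) → ℂ)
    (hc : ∀ a, ∑ k : Fin (d / 2 + 1), c k • psi d hd k.1 ![0,1,0] (ea d a) = 0) :
    ∀ k, c k = 0 := by
  have key : ∀ a : Fin (d+1), ∑ k : Fin (d/2+1), c k * ((d : ℂ) - 2 * a.1) ^ (d - 2 * k.1) = 0 := by
    intro a
    have h2 := hc a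
    simp only [psi_ea, smul_smul, ← Finset.sum_smul] at h2
    exact (smul_eq_zero.1 h2).resolve_right (ea_ne d a)
  set p : Polynomial ℂ := ∑ k : Fin (d/2+1), Polynomial.C (c k) * Polynomial.X ^ (d - 2 * k.1) with hp
  have hp0 : p = 0 := by
    apply Polynomial.eq_zero_of_natDegree_lt_card_of_eval_eq_zero p
      (f := fun a : Fin (d+1) => (d : ℂ) - 2 * a.1)
    · intro a b h
      simp at h
      exact Fin.ext h
    · intro a
      simpa [hp, Polynomial.eval_finsetSum] using key a
    · simp only [Fintype.card_fin]
      apply Nat.lt_succ_of_le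
      apply Polynomial.natDegree_sum_le_of_forall_le
      intro k _
      exact (Polynomial.natDegree_C_mul_X_pow_le _ _).trans (Nat.sub_le _ _)
  intro k
  have h := congrArg (fun p => Polynomial.coeff p (d - 2 * k.1)) hp0
  simp only [hp, Polynomial.finsetSum_coeff, Polynomial.coeff_C_mul_X_pow, Polynomial.coeff_zero] at h
  rw [Finset.sum_eq_single k] at h
  · simpa using h
  · intro b _ hb
    rw [if_neg]
    intro h'
    apply hb
    apply Fin.ext
    omega
  · simp

theorem hdegree {σ : Type*} [Fintype σ] {P : MvPolynomial σ ℂ} {d : ℕ} (hP : P.IsHomogeneous d)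
    {m : σ →₀ ℕ} (hm : coeff m P ≠ 0) : m.degree = d := by
  have := hP hm
  rwa [Finsupp.degree_eq_weight_one]

theorem hom_eval {P : MvPolynomial (Fin 3) ℂ} {d : ℕ} (hP : P.IsHomogeneous d) (c : ℂ)
    (q : Fin 3 → ℂ) : eval (c • q) P = c ^ d * eval q P := by
  rw [eval_eq, eval_eq, Finset.mul_sum]
  apply Finset.sum_congr rfl
  intro m hm
  have h1 : m.degree = d := hdegree hP (mem_support_iff.1 hm)
  have h2 : ∑ i ∈ m.support, m i = d := h1
  simp only [Pi.smul_apply, smul_eq_mul, mul_pow, Finset.prod_mul_distrib]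
  rw [Finset.prod_pow_eq_pow_sum, h2]
  ring

theorem psi_smul {d : ℕ} {ψ : (Fin 3 → ℂ) → (Sd d →ₗ[ℂ] Sd d)} (h : GoodMap d ψ) (c : ℂ)
    (q : Fin 3 → ℂ) (F : Sd d) : ψ (c • q) F = c ^ d • ψ q F := by
  apply Subtype.ext
  apply MvPolynomial.ext
  intro m
  obtain ⟨P, hP, e⟩ := h.1 F m
  rw [e, hom_eval hP, Submodule.coe_smul, coeff_smul, e, smul_eq_mul]

theorem coeff_diag (s t : ℂ) (F : MvPolynomial (Fin 2) ℂ) (m : Fin 2 →₀ ℕ) :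
    coeff m (actHom !![s, 0; 0, t] F) = s ^ m 0 * t ^ m 1 * coeff m F := by
  induction F using MvPolynomial.induction_on' with
  | monomial u a =>
    have : actHom !![s, 0; 0, t] (monomial u a) = C (s ^ u 0 * t ^ u 1) * monomial u a := by
      rw [monomial_eq, map_mul, actHom_C, Finsupp.prod_fintype _ _ (by simp)]
      simp [Fin.prod_univ_two, actHom_X, mul_pow]
      ring
    rw [this, coeff_C_mul, coeff_monomial]
    split_ifs with h
    · rw [h]
    · simp
  | add p q hp hq => rw [map_add, coeff_add, coeff_add, hp, hq]; ring

theorem act_hom {d : ℕ} (g : Matrix (Fin 2) (Fin 2) ℂ) (F : Sd d) : actHom g F.1 ∈ Sd d := by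
  have := ((mem_homogeneousSubmodule _ _).1 F.2).aeval
    (fun i => C (g i 0) * X 0 + C (g i 1) * X 1 : Fin 2 → MvPolynomial (Fin 2) ℂ) (n := 1)
    (fun i => (((isHomogeneous_C _ _).mul (isHomogeneous_X ℂ _)).add
      ((isHomogeneous_C _ _).mul (isHomogeneous_X ℂ _))))
  rw [one_mul] at this
  exact (mem_homogeneousSubmodule _ _).2 this

theorem good_act {d : ℕ} {ψ : (Fin 3 → ℂ) → (Sd d →ₗ[ℂ] Sd d)} (h : GoodMap d ψ)
    (g : Matrix (Fin 2) (Fin 2) ℂ) (hg : g.det = 1) (q : Fin 3 → ℂ) (F : Sd d) :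
    (ψ (qact g q) ⟨actHom g F.1, act_hom g F⟩).1 = actHom g (ψ q F).1 :=
  h.2 g hg q F _ rfl

/-- The diagonal entries of `ψ` at `Q = 2 x₁ x₂`. -/
noncomputable def lam {d : ℕ} (ψ : (Fin 3 → ℂ) → (Sd d →ₗ[ℂ] Sd d)) (a : Fin (d+1)) : ℂ :=
  coeff (Finsupp.single 0 a.1 + Finsupp.single 1 (d - a.1)) (ψ ![0,1,0] (ea d a)).1

theorem psi_diag {d : ℕ} {ψ : (Fin 3 → ℂ) → (Sd d →ₗ[ℂ] Sd d)} (h : GoodMap d ψ)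
    (a : Fin (d+1)) : ψ ![0,1,0] (ea d a) = lam ψ a • ea d a := by
  have hdet : (!![(2:ℂ), 0; 0, 2⁻¹]).det = 1 := by simp [Matrix.det_fin_two]
  have hq : qact !![(2:ℂ), 0; 0, 2⁻¹] ![0,1,0] = ![0,1,0] := by
    simp [qact]
  have h1 := good_act h _ hdet ![0,1,0] (ea d a)
  rw [hq] at h1
  have had : a.1 ≤ d := by omega
  have h2 : (⟨actHom !![(2:ℂ), 0; 0, 2⁻¹] (ea d a).1, act_hom _ _⟩ : Sd d) =
      ((2:ℂ) ^ a.1 * (2⁻¹) ^ (d - a.1)) • ea d a := by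
    apply Subtype.ext
    apply MvPolynomial.ext
    intro m
    rw [Submodule.coe_smul, coeff_smul]
    simp only [coeff_diag, smul_eq_mul, ea, coeff_monomial]
    split_ifs with hm
    · rw [← hm]; simp
    · simp
  rw [h2, map_smul, Submodule.coe_smul] at h1
  apply Subtype.ext
  apply MvPolynomial.ext
  intro m
  have h3 := congrArg (coeff m) h1
  rw [coeff_diag, coeff_smul, smul_eq_mul] at h3
  rw [Submodule.coe_smul, coeff_smul, smul_eq_mul]
  by_cases hm : Finsupp.single 0 a.1 + Finsupp.single 1 (d - a.1) = m
  · subst hm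
    simp [lam, ea]
  · simp only [ea, coeff_monomial, if_neg hm, mul_zero]
    by_contra hne
    have hdeg : m.degree = d :=
      hdegree ((mem_homogeneousSubmodule _ _).1 (ψ ![0,1,0] (ea d a)).2) hne
    rw [Finsupp.degree_eq_sum, Fin.sum_univ_two] at hdeg
    have h4 := mul_right_cancel₀ hne h3
    have h5 : (2:ℂ) ^ (2 * a.1) = 2 ^ (2 * m 0) := by
      have e1 : (2:ℂ) ^ a.1 * (2⁻¹) ^ (d - a.1) * 2 ^ d = 2 ^ (2 * a.1) := by
        obtain ⟨b, hb⟩ := Nat.exists_eq_add_of_le had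
        have hb' : d - a.1 = b := by omega
        have hb2 : (2:ℂ) ^ d = 2 ^ a.1 * 2 ^ b := by rw [← pow_add, ← hb]
        rw [hb', hb2, inv_pow]
        field_simp
        ring
      have e2 : (2:ℂ) ^ m 0 * (2⁻¹) ^ (m 1) * 2 ^ d = 2 ^ (2 * m 0) := by
        rw [← hdeg, inv_pow]
        field_simp
        ring
      rw [← e1, ← e2, h4]
    have h6 : 2 * a.1 = 2 * m 0 := by
      have : (2:ℕ) ^ (2 * a.1) = 2 ^ (2 * m 0) := by exact_mod_cast h5
      exact Nat.pow_right_injective le_rfl this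
    apply hm
    ext i
    fin_cases i <;> simp <;> omega

theorem lam_symm {d : ℕ} {ψ : (Fin 3 → ℂ) → (Sd d →ₗ[ℂ] Sd d)} (h : GoodMap d ψ)
    (a : Fin (d+1)) (ha : lam ψ a = 0) : lam ψ (Fin.rev a) = 0 := by
  have hdet : (!![(0:ℂ), 1; -1, 0]).det = 1 := by simp [Matrix.det_fin_two]
  have hq : qact !![(0:ℂ), 1; -1, 0] ![0,1,0] = (-1 : ℂ) • ![0,1,0] := by
    ext i; fin_cases i <;> simp [qact]
  have h1 := good_act h _ hdet ![0,1,0] (ea d a)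
  have had : a.1 ≤ d := by omega
  have h2 : (⟨actHom !![(0:ℂ), 1; -1, 0] (ea d a).1, act_hom _ _⟩ : Sd d) =
      ((-1 : ℂ) ^ (d - a.1)) • ea d (Fin.rev a) := by
    apply Subtype.ext
    rw [Submodule.coe_smul]
    simp only [ea]
    rw [smul_eq_C_mul, monomial_eq, monomial_eq, map_mul, actHom_C,
      Finsupp.prod_fintype _ _ (by simp), Finsupp.prod_fintype _ _ (by simp)]
    have e : d - (d - a.1) = a.1 := by omega
    simp [Fin.prod_univ_two, actHom_X, Fin.val_rev, e]
    rw [neg_pow]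
    ring
  rw [hq, psi_smul h, h2, map_smul, psi_diag h, psi_diag h, ha, zero_smul] at h1
  have h3 : (-1 : ℂ) ^ d • (-1 : ℂ) ^ (d - a.1) • lam ψ (Fin.rev a) • ea d (Fin.rev a) = 0 := by
    apply Subtype.ext
    rw [h1]
    simp
  simpa [smul_eq_zero, ea_ne] using h3

theorem ea_span {d : ℕ} (T : Sd d →ₗ[ℂ] Sd d) (hT : ∀ a, T (ea d a) = 0) (F : Sd d) :
    T F = 0 := by
  have hF : F = ∑ m ∈ F.1.support.attach, coeff m.1 F.1 •
      ea d ⟨min (m.1 0) d, by omega⟩ := by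
    apply Subtype.ext
    rw [Submodule.coe_sum]
    conv_lhs => rw [F.1.as_sum, ← Finset.sum_attach]
    apply Finset.sum_congr rfl
    intro m _
    have hdeg : m.1.degree = d :=
      hdegree ((mem_homogeneousSubmodule _ _).1 F.2) (mem_support_iff.1 m.2)
    rw [Finsupp.degree_eq_sum, Fin.sum_univ_two] at hdeg
    rw [Submodule.coe_smul]
    simp only [ea, smul_monomial, smul_eq_mul, mul_one]
    have hm : m.1 = Finsupp.single 0 (min (m.1 0) d) + Finsupp.single 1 (d - min (m.1 0) d) := by
      ext i
      fin_cases i <;> simp <;> omega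
    rw [← hm]
  rw [hF, map_sum]
  apply Finset.sum_eq_zero
  intro m _
  rw [map_smul, hT, smul_zero]

theorem actHom_actHom (g h : Matrix (Fin 2) (Fin 2) ℂ) (F) :
    actHom g (actHom h F) = actHom (h * g) F := by
  have : (actHom g).comp (actHom h) = actHom (h * g) := by
    apply MvPolynomial.algHom_ext
    intro i
    simp only [AlgHom.comp_apply, actHom_X, map_add, map_mul, actHom_C, Matrix.mul_apply,
      Fin.sum_univ_two]
    ring
  exact DFunLike.congr_fun this F

theorem actHom_one (F) : actHom 1 F = F := by
  have : actHom 1 = AlgHom.id ℂ _ := by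
    apply MvPolynomial.algHom_ext
    intro i
    fin_cases i <;> simp [actHom_X]
  rw [this]; rfl

theorem good_zero {d : ℕ} {ψ : (Fin 3 → ℂ) → (Sd d →ₗ[ℂ] Sd d)} (h : GoodMap d ψ)
    (h0 : ∀ a : Fin (d+1), a.1 ≤ d / 2 → lam ψ a = 0) : ψ = 0 := by
  have hall : ∀ a : Fin (d+1), lam ψ a = 0 := by
    intro a
    by_cases ha : a.1 ≤ d / 2
    · exact h0 a ha
    · have := lam_symm h (Fin.rev a) (h0 _ (by rw [Fin.val_rev]; omega))
      rwa [Fin.rev_rev] at this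
  have hQ : ∀ F, ψ ![0,1,0] F = 0 := by
    apply ea_span
    intro a
    rw [psi_diag h, hall, zero_smul]
  have hgen : ∀ q : Fin 3 → ℂ, q 0 ≠ 0 → disc q ≠ 0 → ∀ F, ψ q F = 0 := by
    intro q hq0 hdq F
    obtain ⟨s, hs⟩ : ∃ s : ℂ, s ^ 2 = disc q := IsAlgClosed.exists_pow_nat_eq _ (by norm_num)
    have hs0 : s ≠ 0 := by
      rintro rfl
      apply hdq
      rw [← hs]; simp
    have hs' : s ^ 2 = q 1 ^ 2 - q 0 * q 2 := hs
    set g : Matrix (Fin 2) (Fin 2) ℂ := !![1, (q 1 - s) / q 0; q 0 / (2 * s), (q 1 + s) / (2 * s)]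
      with hg
    have hdet : g.det = 1 := by
      simp [hg, Matrix.det_fin_two]
      field_simp
      ring
    have hq : qact g (s • ![0,1,0]) = q := by
      ext i
      fin_cases i
      · simp [qact, hg]; field_simp
      · simp [qact, hg]; field_simp; ring
      · simp [qact, hg]; field_simp; linear_combination -hs'
    have hgu : IsUnit g.det := by rw [hdet]; exact isUnit_one
    have hF : actHom g (actHom g⁻¹ F.1) = F.1 := by
      rw [actHom_actHom, Matrix.nonsing_inv_mul g hgu, actHom_one]
    have h1 := good_act h g hdet (s • ![0,1,0]) ⟨actHom g⁻¹ F.1, act_hom _ _⟩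
    rw [hq, psi_smul h, hQ, smul_zero] at h1
    apply Subtype.ext
    rw [← Subtype.coe_eta F F.2]
    simp only [hF] at h1
    rw [h1]
    simp
  funext q
  apply LinearMap.ext
  intro F
  apply Subtype.ext
  apply MvPolynomial.ext
  intro m
  obtain ⟨P, hP, e⟩ := h.1 F m
  have hP0 : (X 0 * (X 1 ^ 2 - X 0 * X 2)) * P = 0 := by
    apply MvPolynomial.funext
    intro r
    by_cases hr0 : r 0 = 0
    · simp [hr0]
    · by_cases hr : disc r = 0
      · have hr' : r 1 ^ 2 - r 0 * r 2 = 0 := hr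
        simp [hr']
      · have := hgen r hr0 hr F
        rw [map_mul, ← e, this]
        simp
  have hne : (X 0 * (X 1 ^ 2 - X 0 * X 2) : MvPolynomial (Fin 3) ℂ) ≠ 0 := by
    intro hz
    have := congrArg (eval ![1,1,0]) hz
    simp at this
  have hPz := (mul_eq_zero.1 hP0).resolve_left hne
  rw [e, hPz]
  simp

def V (d : ℕ) : Submodule ℂ ((Fin 3 → ℂ) → (Sd d →ₗ[ℂ] Sd d)) where
  carrier := {ψ | GoodMap d ψ}
  zero_mem' := ⟨fun F m => ⟨0, isHomogeneous_zero _ _ _, fun q => by simp⟩,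
    fun g hg q F F' h => by simp [act_eq]⟩
  add_mem' := by
    intro ψ φ hψ hφ
    refine ⟨fun F m => ?_, fun g hg q F F' h => ?_⟩
    · obtain ⟨P, hP, e⟩ := hψ.1 F m
      obtain ⟨R, hR, f⟩ := hφ.1 F m
      exact ⟨P + R, hP.add hR, fun q => by simp [e, f]⟩
    · have h1 := hψ.2 g hg q F F' h
      have h2 := hφ.2 g hg q F F' h
      rw [act_eq] at h1 h2 ⊢
      simp [h1, h2]
  smul_mem' := by
    intro c ψ hψ
    refine ⟨fun F m => ?_, fun g hg q F F' h => ?_⟩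
    · obtain ⟨P, hP, e⟩ := hψ.1 F m
      refine ⟨C c * P, ?_, fun q => by simp [e]⟩
      simpa using (isHomogeneous_C (Fin 3) c).mul hP
    · have h1 := hψ.2 g hg q F F' h
      rw [act_eq] at h1 ⊢
      simp [h1]

noncomputable def up (d : ℕ) : V d →ₗ[ℂ] (Fin (d / 2 + 1) → ℂ) where
  toFun ψ := fun a => lam ψ.1 ⟨a.1, by omega⟩
  map_add' ψ φ := by
    funext a
    simp [lam]
  map_smul' c ψ := by
    funext a
    simp [lam]

theorem up_inj (d : ℕ) : Function.Injective (up d) := by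
  intro ψ φ hψ
  have hmem : ψ.1 + (-1 : ℂ) • φ.1 ∈ V d := (V d).add_mem ψ.2 ((V d).smul_mem _ φ.2)
  have hz := good_zero (ψ := ψ.1 + (-1 : ℂ) • φ.1) hmem (by
    intro a ha
    have h1 : lam ψ.1 a = lam φ.1 a := congrFun hψ ⟨a.1, by omega⟩
    have h2 : lam (ψ.1 + (-1 : ℂ) • φ.1) a = lam ψ.1 a + (-1) * lam φ.1 a := by simp [lam]
    rw [h2, h1]; ring)
  apply Subtype.ext
  funext q
  apply LinearMap.ext
  intro F
  have h3 := LinearMap.congr_fun (congrFun hz q) F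
  have h4 : ψ.1 q F + (-1 : ℂ) • φ.1 q F = 0 := h3
  have h5 : (ψ.1 q F).1 + (-1 : ℂ) • (φ.1 q F).1 = 0 := congrArg Subtype.val h4
  apply Subtype.ext
  rw [neg_one_smul] at h5
  exact add_neg_eq_zero.1 h5

noncomputable def lo (d : ℕ) (hd : 1 ≤ d) : (Fin (d / 2 + 1) → ℂ) →ₗ[ℂ] V d :=
  Fintype.linearCombination ℂ
    (fun k : Fin (d / 2 + 1) => (⟨psi d hd k.1, psi_good d hd k.1 (by omega)⟩ : V d))

theorem lo_inj (d : ℕ) (hd : 1 ≤ d) : Function.Injective (lo d hd) := by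
  rw [injective_iff_map_eq_zero]
  intro c hc
  funext k
  refine psi_indep d hd c (fun a => ?_) k
  have h1 := congrArg (fun ψ : V d => ψ.1 ![0,1,0] (ea d a)) hc
  simpa [lo, Fintype.linearCombination_apply] using h1

/-- the space of equivariant maps `ψ : S_d × S_2 → S_d`, linear in the first
argument and of polynomial degree `d` in the quadratic, has dimension `⌊d/2⌋ + 1`. -/
theorem stmt14 (d : ℕ) (hd : 1 ≤ d) :
    Set.finrank ℂ {ψ : (Fin 3 → ℂ) → (Sd d →ₗ[ℂ] Sd d) | GoodMap d ψ} = d / 2 + 1 := by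
  have hs : Submodule.span ℂ {ψ : (Fin 3 → ℂ) → (Sd d →ₗ[ℂ] Sd d) | GoodMap d ψ} = V d :=
    Submodule.span_eq (V d)
  rw [Set.finrank, hs]
  have : Module.Finite ℂ (V d) := Module.Finite.of_injective (up d) (up_inj d)
  apply le_antisymm
  · simpa using LinearMap.finrank_le_finrank_of_injective (up_inj d)
  · simpa using LinearMap.finrank_le_finrank_of_injective (lo_inj d hd)
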